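/- Let η, ε : F ⊣ U : B → A be an adjunction with F comonadic, G = (FU, ε, FηU) the induced comonad on B, and b₀ an object of B. Then the map Ψ_{F,b₀} : Sub_{A,F}(U(b₀)) → G-coalg(b₀), sending the class of a monomorphism i_a : a → U(b₀) with ξ_{i_a} = ε_{b₀} ∘ F(i_a) invertible to the coalgebra structure FU(ξ_{i_a}) ∘ F(η_a) ∘ ξ_{i_a}^{-1} : b₀ → FU(b₀), is a bijection. -/

import Mathlib

open CategoryTheory

/-- Given an adjunction `F ⊣ U`, an object `b₀` and a morphism `i : a ⟶ U(b₀)` such that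
`ξ_i := ε_{b₀} ∘ F(i)` is invertible, this is the morphism
`Ψ(i) = FU(ξ_i) ∘ F(η_a) ∘ ξ_i⁻¹ : b₀ ⟶ FU(b₀)`. -/
noncomputable def coalgStr {A : Type*} {B : Type*} [Category A] [Category B]
    (F : A ⥤ B) (U : B ⥤ A) (adj : F ⊣ U) {b₀ : B} {a : A}
    (i : a ⟶ U.obj b₀) (h : IsIso (F.map i ≫ adj.counit.app b₀)) :
    b₀ ⟶ F.obj (U.obj b₀) :=
  letI := h
  inv (F.map i ≫ adj.counit.app b₀) ≫ F.map (adj.unit.app a) ≫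
    F.map (U.map (F.map i ≫ adj.counit.app b₀))

/-!
Write `ξ_i = ε ∘ F(i)` for the transpose of `i : a ⟶ U(b)`, and let `K : A ⥤ B_G` be the comparison
functor. For a coalgebra `(b, θ)`, the map `ξ_i` is a coalgebra morphism `K(a) ⟶ (b, θ)` if and only
if `i` equalizes `U(θ)` and `η_{U(b)}`. If moreover `ξ_i` is invertible, this says that `θ = Ψ(i)`;
and if `K` is fully faithful, then `i` is even an equalizer of the pair. Hence `θ` determines the
subobject `i`. Conversely, an isomorphism `K(a) ≅ (b, θ)` is the transpose of such an `i`, which is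
a monomorphism because it is an equalizer.
-/

/-- Transport of a coalgebra structure along an isomorphism of underlying objects. -/
def transportCoalgebra {B : Type*} [Category B] {G : Comonad B} (X : G.Coalgebra) {b : B}
    (φ : X.A ≅ b) : G.Coalgebra where
  A := b
  a := φ.inv ≫ X.a ≫ (G : B ⥤ B).map φ.hom
  counit := by
    rw [Category.assoc, Category.assoc, G.ε.naturality, X.counit_assoc]
    exact φ.inv_hom_id
  coassoc := by
    have mapped_structure : (G : B ⥤ B).map φ.hom ≫ (G : B ⥤ B).map
        (φ.inv ≫ X.a ≫ (G : B ⥤ B).map φ.hom) =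
        (G : B ⥤ B).map X.a ≫ (G : B ⥤ B).map ((G : B ⥤ B).map φ.hom) := by
      rw [← Functor.map_comp, φ.hom_inv_id_assoc, Functor.map_comp]
    simp only [Category.assoc, mapped_structure, G.δ.naturality, X.coassoc_assoc,
      Functor.comp_map]

section Adjunction

open Limits

variable {A : Type*} {B : Type*} [Category A] [Category B] {F : A ⥤ B} {U : B ⥤ A} (adj : F ⊣ U)

theorem homEquiv_comp_map_eq_comp_unit_iff {a : A} {b : B} (φ : F.obj a ⟶ b)
    (θ : b ⟶ F.obj (U.obj b)) :
    adj.homEquiv a b φ ≫ U.map θ = adj.homEquiv a b φ ≫ adj.unit.app (U.obj b) ↔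
      φ ≫ θ = F.map (adj.unit.app a) ≫ F.map (U.map φ) := by
  have homEquiv_comp_unit : adj.homEquiv a b φ ≫ adj.unit.app (U.obj b) =
      adj.homEquiv a _ (F.map (adj.unit.app a) ≫ F.map (U.map φ)) := by
    rw [← F.map_comp, ← adj.homEquiv_unit, adj.homEquiv_unit (f := F.map _), adj.unit_naturality]
  rw [homEquiv_comp_unit, ← adj.homEquiv_naturality_right, (adj.homEquiv a _).injective.eq_iff]

theorem comp_map_eq_comp_unit_iff {a : A} {b : B} (i : a ⟶ U.obj b) (θ : b ⟶ F.obj (U.obj b)) :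
    i ≫ U.map θ = i ≫ adj.unit.app (U.obj b) ↔
      (F.map i ≫ adj.counit.app b) ≫ θ =
        F.map (adj.unit.app a) ≫ F.map (U.map (F.map i ≫ adj.counit.app b)) := by
  have transposed := homEquiv_comp_map_eq_comp_unit_iff adj ((adj.homEquiv a b).symm i) θ
  rwa [Equiv.apply_symm_apply, adj.homEquiv_counit] at transposed

theorem coalgStr_eq_iff {a : A} {b : B} (i : a ⟶ U.obj b)
    [h : IsIso (F.map i ≫ adj.counit.app b)] (θ : b ⟶ F.obj (U.obj b)) :
    coalgStr F U adj i h = θ ↔ i ≫ U.map θ = i ≫ adj.unit.app (U.obj b) := by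
  rw [comp_map_eq_comp_unit_iff, coalgStr, IsIso.inv_comp_eq, eq_comm]

/-- The transpose `ξ_i` of an arrow `i` that equalizes the pair attached to the coalgebra `X`, as a
coalgebra morphism. -/
def coalgebraHomOfFork (X : adj.toComonad.Coalgebra) {a : A} (i : a ⟶ U.obj X.A)
    (hi : i ≫ U.map X.a = i ≫ adj.unit.app (U.obj X.A)) :
    (Comonad.comparison adj).obj a ⟶ X where
  f := F.map i ≫ adj.counit.app X.A
  h := ((comp_map_eq_comp_unit_iff adj i X.a).1 hi).symm

/-- The universal property of an arrow `i` that equalizes the pair attached to `X` and has an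
invertible transpose: full faithfulness turns maps `c ⟶ a` into coalgebra morphisms `K(c) ⟶ X`,
that is, into maps `c ⟶ U(X)` equalizing the pair. -/
noncomputable def isLimitForkOfIsIsoTranspose [(Comonad.comparison adj).Full]
    [(Comonad.comparison adj).Faithful] (X : adj.toComonad.Coalgebra) {a : A}
    (i : a ⟶ U.obj X.A) [IsIso (F.map i ≫ adj.counit.app X.A)]
    (hi : i ≫ U.map X.a = i ≫ adj.unit.app (U.obj X.A)) :
    IsLimit (Fork.ofι i hi) := by
  let K := Comonad.comparison adj
  let φ : K.obj a ⟶ X := coalgebraHomOfFork adj X i hi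
  have : IsIso φ.f := ‹_›
  have : IsIso φ := Comonad.coalgebra_iso_of_iso adj.toComonad φ
  have comp_eq_iff {c : A} (m : c ⟶ a) (j : c ⟶ U.obj X.A)
      (hj : j ≫ U.map X.a = j ≫ adj.unit.app (U.obj X.A)) :
      m ≫ i = j ↔ K.map m = coalgebraHomOfFork adj X j hj ≫ inv φ := by
    rw [IsIso.eq_comp_inv, Comonad.Coalgebra.Hom.ext_iff,
      ← (adj.homEquiv c X.A).symm.injective.eq_iff, adj.homEquiv_naturality_left_symm,
      adj.homEquiv_counit, adj.homEquiv_counit]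
    rfl
  refine Fork.IsLimit.ofExistsUnique fun s => ?_
  refine ⟨K.preimage (coalgebraHomOfFork adj X s.ι s.condition ≫ inv φ), ?_, fun m hm => ?_⟩
  · exact (comp_eq_iff _ _ s.condition).2 (K.map_preimage _)
  · exact K.map_injective (((comp_eq_iff m _ s.condition).1 hm).trans (K.map_preimage _).symm)

/-- The class `Sub_{A,F}(U(b))`: subobjects of `U(b)` whose representing monomorphism has an
invertible transpose. -/
abbrev IsoTransposeSubobject (b : B) : Type _ :=
  {P : Subobject (U.obj b) // IsIso (F.map P.arrow ≫ adj.counit.app b)}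

/-- The set `G-coalg(b)` of coalgebra structures on `b`, for the comonad `G` on `B` generated by
the adjunction. -/
abbrev CoalgebraStructure (b : B) : Type _ :=
  {θ : b ⟶ F.obj (U.obj b) //
    θ ≫ adj.counit.app b = 𝟙 b ∧
    θ ≫ F.map (adj.unit.app (U.obj b)) = θ ≫ F.map (U.map θ)}

/-- The map `Ψ_{F,b}`. Its value at `i : a ⟶ U(b)` is the structure of the comparison coalgebra of
`a` transported along `ξ_i`, so the coalgebra laws come for free. -/
noncomputable def subobjectToCoalgebraStructure (b : B) (P : IsoTransposeSubobject adj b) :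
    CoalgebraStructure adj b :=
  let X := transportCoalgebra ((Comonad.comparison adj).obj (P.1 : A))
    (@asIso _ _ _ _ (F.map P.1.arrow ≫ adj.counit.app b) P.2)
  ⟨coalgStr F U adj P.1.arrow P.2, X.counit, X.coassoc⟩

theorem subobjectToCoalgebraStructure_eq_iff {b : B} (P : IsoTransposeSubobject adj b)
    (θ : CoalgebraStructure adj b) :
    subobjectToCoalgebraStructure adj b P = θ ↔
      P.1.arrow ≫ U.map θ.1 = P.1.arrow ≫ adj.unit.app (U.obj b) :=
  have := P.2
  Subtype.ext_iff.trans (coalgStr_eq_iff adj P.1.arrow θ.1)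

theorem subobjectToCoalgebraStructure_injective [(Comonad.comparison adj).Full]
    [(Comonad.comparison adj).Faithful] (b : B) :
    Function.Injective (subobjectToCoalgebraStructure adj b) := by
  intro P Q hPQ
  let θ := subobjectToCoalgebraStructure adj b Q
  let X : adj.toComonad.Coalgebra := ⟨b, θ.1, θ.2.1, θ.2.2⟩
  have := P.2
  have := Q.2
  let hP := isLimitForkOfIsIsoTranspose adj X P.1.arrow
    ((subobjectToCoalgebraStructure_eq_iff adj P θ).1 hPQ)
  let hQ := isLimitForkOfIsIsoTranspose adj X Q.1.arrow
    ((subobjectToCoalgebraStructure_eq_iff adj Q θ).1 rfl)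
  exact Subtype.ext <| Subobject.eq_of_comm (hP.conePointUniqueUpToIso hQ)
    (hP.conePointUniqueUpToIso_hom_comp hQ WalkingParallelPair.zero)

theorem exists_subobjectToCoalgebraStructure_eq {b : B} (θ : CoalgebraStructure adj b) {a : A}
    (i : a ⟶ U.obj b) [Mono i] [IsIso (F.map i ≫ adj.counit.app b)]
    (hi : i ≫ U.map θ.1 = i ≫ adj.unit.app (U.obj b)) :
    ∃ P, subobjectToCoalgebraStructure adj b P = θ := by
  have arrow_eq : (Subobject.mk i).arrow = (Subobject.underlyingIso i).hom ≫ i :=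
    (Subobject.underlyingIso_hom_comp_eq_mk i).symm
  have isIso_transpose : IsIso (F.map (Subobject.mk i).arrow ≫ adj.counit.app b) := by
    rw [arrow_eq, F.map_comp, Category.assoc]
    infer_instance
  refine ⟨⟨Subobject.mk i, isIso_transpose⟩, ?_⟩
  rw [subobjectToCoalgebraStructure_eq_iff, arrow_eq, Category.assoc, Category.assoc, hi]

theorem subobjectToCoalgebraStructure_surjective [(Comonad.comparison adj).IsEquivalence] (b : B) :
    Function.Surjective (subobjectToCoalgebraStructure adj b) := by
  intro θ
  let X : adj.toComonad.Coalgebra := ⟨b, θ.1, θ.2.1, θ.2.2⟩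
  let a := (Comonad.comparison adj).objPreimage X
  let e : (Comonad.comparison adj).obj a ≅ X := (Comonad.comparison adj).objObjPreimageIso X
  let φ : F.obj a ≅ b := adj.toComonad.forget.mapIso e
  let i : a ⟶ U.obj b := adj.homEquiv a b φ.hom
  have transpose_eq : F.map i ≫ adj.counit.app b = φ.hom :=
    (adj.homEquiv_counit _ _ _).symm.trans ((adj.homEquiv a b).symm_apply_apply φ.hom)
  have isIso_transpose : IsIso (F.map i ≫ adj.counit.app b) := transpose_eq ▸ φ.isIso_hom
  have hi : i ≫ U.map θ.1 = i ≫ adj.unit.app (U.obj b) :=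
    (homEquiv_comp_map_eq_comp_unit_iff adj φ.hom θ.1).2 e.hom.h.symm
  have : Mono i := mono_of_isLimit_fork (isLimitForkOfIsIsoTranspose adj X i hi)
  exact exists_subobjectToCoalgebraStructure_eq adj θ i hi

end Adjunction

/-- Let `η, ε : F ⊣ U : B → A` be an adjunction with `F` comonadic (the
comparison functor into the Eilenberg–Moore category of coalgebras for the induced comonad
`G = (FU, ε, FηU)` is an equivalence), and let `b₀ ∈ B`.  Then the map
`Ψ_{F,b₀} : Sub_{A,F}(U(b₀)) → G-coalg(b₀)`, sending the class of a monomorphism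
`i : a ⟶ U(b₀)` with `ξ_i = ε_{b₀} ∘ F(i)` invertible to the coalgebra structure
`FU(ξ_i) ∘ F(η_a) ∘ ξ_i⁻¹ : b₀ ⟶ FU(b₀)`, is a bijection. -/
theorem stmt_6 {A : Type*} {B : Type*} [Category A] [Category B]
    {F : A ⥤ B} {U : B ⥤ A} (adj : F ⊣ U)
    (hF : (Comonad.comparison adj).IsEquivalence) (b₀ : B) :
    ∃ e : {P : Subobject (U.obj b₀) // IsIso (F.map P.arrow ≫ adj.counit.app b₀)} ≃
          {θ : b₀ ⟶ F.obj (U.obj b₀) //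
            θ ≫ adj.counit.app b₀ = 𝟙 b₀ ∧
            θ ≫ F.map (adj.unit.app (U.obj b₀)) = θ ≫ F.map (U.map θ)},
      ∀ P, ((e P).1 : b₀ ⟶ F.obj (U.obj b₀)) = coalgStr F U adj P.1.arrow P.2 := by
  exact ⟨Equiv.ofBijective (subobjectToCoalgebraStructure adj b₀)
    ⟨subobjectToCoalgebraStructure_injective adj b₀,
      subobjectToCoalgebraStructure_surjective adj b₀⟩, fun _ => rfl⟩
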